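/- Let d ≥ 2, let Λ be a full-rank lattice in ℝ^d with det Λ = 1, and let P = {z ∈ ℝ^d : |z_i| ≤ λ_i, i = 1,…,d} for positive λ_i. If the pseudo-compound P* = {z : |z_i| ≤ (∏_j λ_j)/λ_i} contains a nonzero point of the dual lattice Λ*, then c·P contains a nonzero point of Λ, where c = d^{1/(2(d−1))}. -/

import Mathlib

open MeasureTheory Set ProbabilityTheory

lemma bathtub {Ω : Type*} [MeasurableSpace Ω] (μ : Measure Ω) [IsProbabilityMeasure μ]
    (X : Ω → ℝ) (hX : Measurable X) (κ : ℝ) (hκ : 0 < κ)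
    (h : ∀ s > 0, μ {ω | |X ω| < s} ≤ ENNReal.ofReal (κ * s)) :
    ENNReal.ofReal (1 / (3 * κ ^ 2)) ≤ ∫⁻ ω, ENNReal.ofReal (X ω ^ 2) ∂μ := by
  have key := lintegral_rpow_eq_lintegral_meas_le_mul (μ := μ) (f := fun ω => |X ω|)
    (Filter.Eventually.of_forall fun ω => abs_nonneg _) hX.abs.aemeasurable (p := 2) two_pos
  have e1 : ∀ ω, |X ω| ^ (2:ℝ) = X ω ^ 2 := fun ω => by
    rw [Real.rpow_two, sq_abs]
  simp only [e1] at key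
  rw [key]
  have hk : (0:ℝ) ≤ 1 / κ := by positivity
  have e2 : ∫ t in (0:ℝ)..(1/κ), (1 - κ * t) * t = 1 / (6 * κ ^ 2) := by
    have : ∀ t : ℝ, (1 - κ * t) * t = t - κ * t ^ 2 := fun t => by ring
    simp only [this]
    rw [intervalIntegral.integral_sub (by simp)
      ((by fun_prop : Continuous fun t : ℝ => κ * t ^ 2).intervalIntegrable _ _),
      intervalIntegral.integral_const_mul, integral_id, integral_pow]
    have : κ ≠ 0 := hκ.ne'
    push_cast
    field_simp
    norm_num
  have hint : IntegrableOn (fun t : ℝ => (1 - κ * t) * t) (Ioc 0 (1/κ)) :=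
    ((by fun_prop : Continuous fun t : ℝ => (1 - κ * t) * t).integrableOn_Icc).mono_set
      Ioc_subset_Icc_self
  have e3 : ∫⁻ t in Ioc 0 (1/κ), ENNReal.ofReal ((1 - κ * t) * t)
      = ENNReal.ofReal (1 / (6 * κ ^ 2)) := by
    rw [← e2, intervalIntegral.integral_of_le hk, ofReal_integral_eq_lintegral_ofReal hint]
    filter_upwards [ae_restrict_mem measurableSet_Ioc] with t ht
    have : κ * t ≤ 1 := by
      have := ht.2
      rw [le_div_iff₀ hκ] at this
      linarith
    exact mul_nonneg (by linarith) ht.1.le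
  have e4 : ∫⁻ t in Ioc 0 (1/κ), ENNReal.ofReal ((1 - κ * t) * t) ≤
      ∫⁻ t in Ioi 0, μ {a | t ≤ |X a|} * ENNReal.ofReal (t ^ ((2:ℝ) - 1)) := by
    refine le_trans ?_ (lintegral_mono_set (Ioc_subset_Ioi_self : Ioc 0 (1/κ) ⊆ Ioi 0))
    refine setLIntegral_mono' measurableSet_Ioc fun t ht => ?_
    have h1 : κ * t ≤ 1 := by
      have := ht.2
      rw [le_div_iff₀ hκ] at this
      linarith
    have : t ^ ((2:ℝ) - 1) = t := by norm_num
    rw [this, ENNReal.ofReal_mul (by linarith)]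
    gcongr
    have hc : {a | t ≤ |X a|} = {ω | |X ω| < t}ᶜ := by ext; simp
    rw [hc, prob_compl_eq_one_sub (measurableSet_lt hX.abs measurable_const),
      ENNReal.ofReal_sub _ (by have := ht.1; positivity), ENNReal.ofReal_one]
    exact tsub_le_tsub_left (h t ht.1) _
  rw [e3] at e4
  calc ENNReal.ofReal (1 / (3 * κ ^ 2))
      = ENNReal.ofReal 2 * ENNReal.ofReal (1 / (6 * κ ^ 2)) := by
        rw [← ENNReal.ofReal_mul two_pos.le]; congr 1; field_simp; norm_num
    _ ≤ _ := by gcongr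

lemma slab {d : ℕ} (a : Fin d → ℝ) (κ : ℝ) (hκ : 0 < κ) (ha : ∑ i, a i ^ 2 < 4 / κ ^ 2) :
    ∃ σ > 0, ENNReal.ofReal (κ * σ) <
      volume {u : Fin d → ℝ | (∀ i, |u i| ≤ 1 / 2) ∧ |∑ i, a i * u i| < σ} := by
  by_contra! hcon
  let ν : Measure ℝ := volume.restrict (Icc (-1/2) (1/2))
  have : IsProbabilityMeasure ν := ⟨by simp [ν]; norm_num⟩
  let μ : Measure (Fin d → ℝ) := Measure.pi fun _ => ν
  have hμ : μ = volume.restrict (univ.pi fun _ => Icc (-1/2) (1/2)) := by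
    rw [volume_pi, Measure.restrict_pi_pi]
  have hX : Measurable (fun u : Fin d → ℝ => ∑ i, a i * u i) := by fun_prop
  have hb := bathtub μ (fun u => ∑ i, a i * u i) hX κ hκ (fun s hs => by
    refine le_trans (le_of_eq ?_) (hcon s hs)
    rw [hμ, Measure.restrict_apply (measurableSet_lt hX.abs measurable_const)]
    congr 1
    ext u
    simp only [mem_inter_iff, mem_ofPred_eq, mem_pi, mem_univ, true_implies, mem_Icc, abs_le,
      neg_div]
    tauto)
  have hid : MemLp (fun t : ℝ => t) 2 ν :=
    memLp_of_bounded (ae_restrict_mem measurableSet_Icc) measurable_id.aestronglyMeasurable 2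
  have hm : ∀ i, MemLp (fun t : ℝ => a i * t) 2 ν := fun i => hid.const_mul (a i)
  have hmean : ∫ t, t ∂ν = 0 := by
    simp only [ν]
    rw [integral_Icc_eq_integral_Ioc, ← intervalIntegral.integral_of_le (by norm_num), integral_id]
    norm_num
  have hvar : Var[fun t : ℝ => t; ν] = 1 / 12 := by
    rw [variance_of_integral_eq_zero hid.aemeasurable hmean]
    simp only [ν]
    rw [integral_Icc_eq_integral_Ioc, ← intervalIntegral.integral_of_le (by norm_num), integral_pow]
    norm_num
  have hV := variance_sum_pi (μ := fun _ : Fin d => ν) (X := fun i t => a i * t) hm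
  have hvi : ∀ i, Var[fun t : ℝ => a i * t; ν] = a i ^ 2 * (1 / 12) := fun i => by
    rw [variance_const_mul, hvar]
  simp only [hvi] at hV
  have hfe : (∑ i, fun ω : Fin d → ℝ => a i * ω i) = fun u => ∑ i, a i * u i := by
    ext u; simp
  rw [hfe] at hV
  have hmi : ∀ i, MemLp (fun u : Fin d → ℝ => a i * u i) 2 μ := fun i =>
    (hm i).comp_measurePreserving (measurePreserving_eval _ i)
  have hXm : MemLp (fun u : Fin d → ℝ => ∑ i, a i * u i) 2 μ := memLp_finsetSum _ fun i _ => hmi i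
  have hX0 : ∫ u, ∑ i, a i * u i ∂μ = 0 := by
    rw [integral_finsetSum _ fun i _ => (hmi i).integrable one_le_two]
    refine Finset.sum_eq_zero fun i _ => ?_
    rw [integral_const_mul]
    have := integral_comp_eval (μ := fun _ : Fin d => ν) (i := i) (f := fun t : ℝ => t)
      hid.aestronglyMeasurable
    rw [this, hmean, mul_zero]
  rw [variance_of_integral_eq_zero hX.aemeasurable hX0] at hV
  rw [← ofReal_integral_eq_lintegral_ofReal hXm.integrable_sq
    (Filter.Eventually.of_forall fun ω => sq_nonneg _)] at hb
  change ∫ u, (∑ i, a i * u i) ^ 2 ∂μ = _ at hV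
  rw [hV, ENNReal.ofReal_le_ofReal_iff (by positivity), ← Finset.sum_mul] at hb
  have : 1 / (3 * κ ^ 2) = 4 / κ ^ 2 * (1 / 12) := by field_simp; norm_num
  linarith


lemma mink {d : ℕ} (A : Matrix (Fin d) (Fin d) ℝ) (hA : A.det ≠ 0) (S : Set (Fin d → ℝ))
    (hS : Convex ℝ S) (hsymm : ∀ u ∈ S, -u ∈ S)
    (hvol : ENNReal.ofReal (2 ^ d * |A.det|) < volume S) :
    ∃ y : Fin d → ℤ, y ≠ 0 ∧ A.mulVec (fun j => (y j : ℝ)) ∈ S := by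
  let b := Pi.basisFun ℝ (Fin d)
  have hdet : LinearMap.det (Matrix.toLin' A) ≠ 0 := by rwa [LinearMap.det_toLin']
  have hpre := Measure.addHaar_preimage_linearMap volume hdet S
  rw [LinearMap.det_toLin'] at hpre
  have : Countable (Submodule.span ℤ (range b)).toAddSubgroup :=
    inferInstanceAs (Countable (Submodule.span ℤ (range b)))
  have hpos : 0 < |A.det| := abs_pos.mpr hA
  obtain ⟨⟨v, hv⟩, hne, hmem⟩ := exists_ne_zero_mem_lattice_of_measure_mul_two_pow_lt_measure
    (μ := volume) (L := (Submodule.span ℤ (range b)).toAddSubgroup)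
    (s := Matrix.toLin' A ⁻¹' S)
    (ZSpan.isAddFundamentalDomain' b volume) (fun u hu => by
      have := hsymm _ hu
      rwa [← map_neg] at this) (hS.linear_preimage _) (by
      rw [hpre, ZSpan.fundamentalDomain_pi_basisFun, Real.volume_pi_Ico]
      simp only [sub_zero, ENNReal.ofReal_one, Finset.prod_const_one, one_mul,
        Module.finrank_fin_fun, abs_inv]
      have h2 : ENNReal.ofReal |A.det|⁻¹ * ENNReal.ofReal (2 ^ d * |A.det|) = 2 ^ d := by
        rw [← ENNReal.ofReal_mul (by positivity), show |A.det|⁻¹ * (2 ^ d * |A.det|) = 2 ^ d by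
          field_simp, ENNReal.ofReal_pow (by norm_num)]
        simp
      rw [← h2]
      exact ENNReal.mul_lt_mul_right (by simpa using hA) (by simp) hvol)
  have hint := (b.mem_span_iff_repr_mem ℤ v).mp hv
  choose y hy using hint
  have hvy : (fun j => (y j : ℝ)) = v := by
    ext j; simpa [b] using hy j
  refine ⟨y, ?_, ?_⟩
  · rintro rfl
    apply hne
    ext j
    simp [← hvy]
  · rw [hvy]; simpa using hmem

lemma slab_convex {d : ℕ} (a : Fin d → ℝ) (σ : ℝ) :
    Convex ℝ {u : Fin d → ℝ | (∀ i, |u i| ≤ 1 / 2) ∧ |∑ i, a i * u i| < σ} := by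
  rintro u ⟨hu1, hu2⟩ v ⟨hv1, hv2⟩ p q hp hq hpq
  have hq' : q = 1 - p := by linarith
  have aux : ∀ s t : ℝ, |p * s + q * t| ≤ p * |s| + q * |t| := fun s t => by
    refine (abs_add_le _ _).trans (le_of_eq ?_)
    rw [abs_mul, abs_mul, abs_of_nonneg hp, abs_of_nonneg hq]
  refine ⟨fun i => ?_, ?_⟩
  · have := aux (u i) (v i)
    have h1 := mul_le_mul_of_nonneg_left (hu1 i) hp
    have h2 := mul_le_mul_of_nonneg_left (hv1 i) hq
    simp only [Pi.add_apply, Pi.smul_apply, smul_eq_mul]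
    linarith
  · have e : ∑ i, a i * (p • u + q • v) i = p * ∑ i, a i * u i + q * ∑ i, a i * v i := by
      rw [Finset.mul_sum, Finset.mul_sum, ← Finset.sum_add_distrib]
      refine Finset.sum_congr rfl fun i _ => ?_
      simp only [Pi.add_apply, Pi.smul_apply, smul_eq_mul]
      ring
    rw [e]
    refine (aux _ _).trans_lt ?_
    rcases hp.eq_or_lt with h | h
    · subst h
      have : q = 1 := by linarith
      subst this
      linarith
    · have h1 := mul_lt_mul_of_pos_left hu2 h
      have h2 := mul_le_mul_of_nonneg_left hv2.le hq
      have : p * σ + q * σ = σ := by rw [← add_mul, hpq, one_mul]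
      linarith

lemma approx (d : ℕ) (hd : 2 ≤ d)
    (lam : Fin d → ℝ) (hlam : ∀ i, 0 < lam i)
    (M : Matrix (Fin d) (Fin d) ℝ) (hM : M.det = 1)
    (z : Fin d → ℝ) (x : Fin d → ℤ)
    (hz : z = (M.transpose)⁻¹.mulVec (fun j => (x j : ℝ)))
    (hz0 : z ≠ 0)
    (hzP : ∀ i, |z i| ≤ (∏ j, lam j) / lam i)
    (c : ℝ) (hc : 0 < c) (hcd : (d : ℝ) < (c ^ (d - 1)) ^ 2) :
    ∃ y : Fin d → ℤ, y ≠ 0 ∧ ∀ i, |M.mulVec (fun j => (y j : ℝ)) i| ≤ c * lam i := by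
  set Q := ∏ j, lam j with hQ
  have hQ0 : 0 < Q := Finset.prod_pos fun i _ => hlam i
  set xr : Fin d → ℝ := fun j => (x j : ℝ) with hxr
  have hzM : M.transpose.mulVec z = xr := by
    rw [hz, Matrix.mulVec_mulVec, Matrix.mul_nonsing_inv _ (by simp [hM]), Matrix.one_mulVec]
  have hx0 : xr ≠ 0 := by
    intro h0
    apply hz0
    rw [hz, h0, Matrix.mulVec_zero]
  have hxx : 0 < xr ⬝ᵥ xr := by
    have := dotProduct_self_eq_zero (v := xr)
    have h2 : 0 ≤ xr ⬝ᵥ xr := Finset.sum_nonneg fun i _ => mul_self_nonneg _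
    exact lt_of_le_of_ne h2 fun h => hx0 (this.mp h.symm)
  let κ := 2 / (c ^ (d - 1) * Q)
  have hκ : 0 < κ := by positivity
  obtain ⟨σ, hσ, hvol⟩ := slab (fun i => lam i * z i) κ hκ (by
    have h1 : ∀ i, (lam i * z i) ^ 2 ≤ Q ^ 2 := fun i => by
      have := hzP i
      rw [le_div_iff₀ (hlam i)] at this
      rw [← sq_abs, abs_mul, abs_of_pos (hlam i)]
      have h0 : 0 ≤ lam i * |z i| := mul_nonneg (hlam i).le (abs_nonneg _)
      exact pow_le_pow_left₀ h0 (by linarith) 2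
    calc ∑ i, (lam i * z i) ^ 2 ≤ ∑ i : Fin d, Q ^ 2 := Finset.sum_le_sum fun i _ => h1 i
      _ = d * Q ^ 2 := by simp
      _ < (c ^ (d - 1)) ^ 2 * Q ^ 2 := by gcongr
      _ = 4 / κ ^ 2 := by simp only [κ]; field_simp; norm_num)
  let s := 2 * c * σ
  have hs : 0 < s := by positivity
  let T : Matrix (Fin d) (Fin d) ℝ := 1 + Matrix.replicateCol Unit (((s - 1) / (xr ⬝ᵥ xr)) • xr) *
    Matrix.replicateRow Unit xr
  have hT : T.det = s := by
    simp only [T]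
    rw [Matrix.det_one_add_replicateCol_mul_replicateRow, dotProduct_smul, smul_eq_mul]
    field_simp
    ring
  have hTv : ∀ v, T.mulVec v = v + ((s - 1) / (xr ⬝ᵥ xr) * (xr ⬝ᵥ v)) • xr := fun v => by
    ext i
    simp only [T, Matrix.add_mulVec, Matrix.one_mulVec]
    rw [← Matrix.mulVec_mulVec]
    have hrow : (Matrix.replicateRow Unit xr).mulVec v = fun _ => xr ⬝ᵥ v := rfl
    rw [hrow]
    simp only [Matrix.mulVec, Pi.add_apply, Pi.smul_apply, smul_eq_mul]
    simp only [dotProduct, Matrix.replicateCol_apply,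
      Finset.univ_unique, Finset.sum_singleton, Pi.smul_apply, smul_eq_mul]
    ring
  have hxT : ∀ v, xr ⬝ᵥ T.mulVec v = s * (xr ⬝ᵥ v) := fun v => by
    rw [hTv, dotProduct_add, dotProduct_smul, smul_eq_mul]
    field_simp
    ring
  let A := Matrix.diagonal (fun i => (2 * c * lam i)⁻¹) * (M * T)
  have hAdet : A.det = s / ((2 * c) ^ d * Q) := by
    simp only [A]
    rw [Matrix.det_mul, Matrix.det_mul, hM, hT, Matrix.det_diagonal, Finset.prod_inv_distrib,
      Finset.prod_mul_distrib]
    simp [hQ]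
    field_simp
  have hAv : ∀ v i, A.mulVec v i = (2 * c * lam i)⁻¹ * M.mulVec (T.mulVec v) i := fun v i => by
    simp only [A]
    rw [← Matrix.mulVec_mulVec, Matrix.mulVec_diagonal, ← Matrix.mulVec_mulVec]
  have hApos : 0 < A.det := by rw [hAdet]; positivity
  obtain ⟨y, hy0, hy1, hy2⟩ := mink A hApos.ne' _ (slab_convex (fun i => lam i * z i) σ)
    (fun u hu => by simpa using hu) (by
      refine lt_of_eq_of_lt ?_ hvol
      congr 1
      rw [abs_of_pos hApos, hAdet]
      obtain ⟨n, rfl⟩ : ∃ n, d = n + 1 := ⟨d - 1, by omega⟩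
      simp only [κ, s, Nat.add_sub_cancel]
      rw [mul_pow, pow_succ c]
      field_simp)
  set yr : Fin d → ℝ := fun j => (y j : ℝ) with hyr
  have hsum : ∑ i, lam i * z i * A.mulVec yr i = σ * (xr ⬝ᵥ yr) := by
    have h1 : ∀ i, lam i * z i * A.mulVec yr i = (2 * c)⁻¹ * (z i * M.mulVec (T.mulVec yr) i) :=
      fun i => by
        rw [hAv]
        have := (hlam i).ne'
        field_simp
    rw [Finset.sum_congr rfl fun i _ => h1 i, ← Finset.mul_sum]
    change (2 * c)⁻¹ * (z ⬝ᵥ M.mulVec (T.mulVec yr)) = _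
    rw [Matrix.dotProduct_mulVec, ← Matrix.mulVec_transpose, hzM, hxT]
    simp only [s]
    field_simp
  rw [hsum, abs_mul, abs_of_pos hσ] at hy2
  have hxy : xr ⬝ᵥ yr = ((x ⬝ᵥ y : ℤ) : ℝ) := by simp [dotProduct, hxr, hyr]
  have hzero : xr ⬝ᵥ yr = 0 := by
    have : |xr ⬝ᵥ yr| < 1 := by
      by_contra! h
      nlinarith
    rw [hxy] at this ⊢
    have h3 : |(x ⬝ᵥ y : ℤ)| < 1 := by exact_mod_cast this
    rw [Int.abs_lt_one_iff.mp h3, Int.cast_zero]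
  refine ⟨y, hy0, fun i => ?_⟩
  have h := hy1 i
  rw [hAv, hTv, hzero, mul_zero, zero_smul, add_zero, abs_mul,
    abs_of_pos (by have := hlam i; positivity), inv_mul_le_iff₀ (by have := hlam i; positivity)] at h
  linarith

lemma final (d : ℕ) (hd : 2 ≤ d)
    (lam : Fin d → ℝ) (hlam : ∀ i, 0 < lam i)
    (M : Matrix (Fin d) (Fin d) ℝ) (hM : M.det = 1) (c : ℝ)
    (happ : ∀ c' > c, ∃ y : Fin d → ℤ, y ≠ 0 ∧
      ∀ i, |M.mulVec (fun j => (y j : ℝ)) i| ≤ c' * lam i) :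
    ∃ y : Fin d → ℤ, y ≠ 0 ∧ ∀ i, |M.mulVec (fun j => (y j : ℝ)) i| ≤ c * lam i := by
  by_contra! hcon
  have hfin : {y : Fin d → ℤ | ∀ i, |M.mulVec (fun j => (y j : ℝ)) i| ≤ (c + 1) * lam i}.Finite := by
    refine (Set.Finite.pi' (ι := Fin d) (κ := fun _ => ℤ) (t := fun j => {n : ℤ |
      |n| ≤ ⌈∑ i, |M⁻¹ j i| * ((c + 1) * lam i)⌉}) fun j => ?_).subset fun y hy j => ?_
    · refine (Set.finite_Icc (α := ℤ) (-⌈∑ i, |M⁻¹ j i| * ((c + 1) * lam i)⌉)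
        ⌈∑ i, |M⁻¹ j i| * ((c + 1) * lam i)⌉).subset
        fun n (hn : |n| ≤ _) => abs_le.mp hn
    · have h1 : (y j : ℝ) = M⁻¹.mulVec (M.mulVec (fun j => (y j : ℝ))) j := by
        rw [Matrix.mulVec_mulVec, Matrix.nonsing_inv_mul _ (by simp [hM]), Matrix.one_mulVec]
      have h2 : |(y j : ℝ)| ≤ ∑ i, |M⁻¹ j i| * ((c + 1) * lam i) := by
        rw [h1]
        simp only [Matrix.mulVec, dotProduct] at hy ⊢
        refine (Finset.abs_sum_le_sum_abs (G := ℝ) _ _).trans (Finset.sum_le_sum fun i _ => ?_)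
        rw [abs_mul]
        exact mul_le_mul_of_nonneg_left (hy i) (abs_nonneg _)
      have h3 := h2.trans (Int.le_ceil _)
      exact_mod_cast h3
  have hev : ∀ᶠ c' in nhdsWithin c (Ioi c), ∀ y ∈ {y : Fin d → ℤ |
      ∀ i, |M.mulVec (fun j => (y j : ℝ)) i| ≤ (c + 1) * lam i}, y ≠ 0 →
      ∃ i, c' * lam i < |M.mulVec (fun j => (y j : ℝ)) i| := by
    refine (Filter.eventually_all_finite hfin).mpr fun y _ => ?_
    by_cases hy : y = 0
    · simp [hy]
    obtain ⟨i, hi⟩ := hcon y hy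
    have ht : Filter.Tendsto (fun c' : ℝ => c' * lam i) (nhdsWithin c (Ioi c))
      (nhds (c * lam i)) := ((continuous_id.mul continuous_const).tendsto c).mono_left
        nhdsWithin_le_nhds
    filter_upwards [ht.eventually_lt_const hi] with c' hc' _ using ⟨i, hc'⟩
  obtain ⟨c', h1, h2, h3⟩ := (hev.and ((Filter.Eventually.and (self_mem_nhdsWithin)
    (Ioo_mem_nhdsGT (lt_add_one c))))).exists
  obtain ⟨y, hy0, hy⟩ := happ c' h2
  obtain ⟨i, hi⟩ := h1 y (fun i => (hy i).trans
    (mul_le_mul_of_nonneg_right h3.2.le (hlam i).le)) hy0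
  exact absurd (hy i) (not_le.mpr hi)

/-- Mahler's theorem in terms of pseudo-compound parallelepipeds: let `Λ = Mℤ^d`
be a unimodular lattice with dual `Λ* = (Mᵀ)⁻¹ℤ^d`, and let
`P = {z : |z i| ≤ λ i}`. If the pseudo-compound `P* = {z : |z i| ≤ (∏ λ)/λ i}`
contains a nonzero point of `Λ*`, then `cP` contains a nonzero point of `Λ`,
where `c = d^{1/(2(d-1))}`. -/
theorem mahler_pseudo_compound (d : ℕ) (hd : 2 ≤ d)
    (lam : Fin d → ℝ) (hlam : ∀ i, 0 < lam i)
    (M : Matrix (Fin d) (Fin d) ℝ) (hM : M.det = 1)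
    (z : Fin d → ℝ) (x : Fin d → ℤ)
    (hz : z = (M.transpose)⁻¹.mulVec (fun j => (x j : ℝ)))
    (hz0 : z ≠ 0)
    (hzP : ∀ i, |z i| ≤ (∏ j, lam j) / lam i) :
    ∃ (w : Fin d → ℝ) (y : Fin d → ℤ),
      w = M.mulVec (fun j => (y j : ℝ)) ∧ w ≠ 0 ∧
      ∀ i, |w i| ≤ (d : ℝ) ^ (1 / (2 * ((d : ℝ) - 1))) * lam i := by
  have hd0 : (0:ℝ) < d := by exact_mod_cast (by omega : 0 < d)
  have hd1 : (d:ℝ) - 1 ≠ 0 := by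
    have : (2:ℝ) ≤ d := by exact_mod_cast hd
    linarith
  set c := (d : ℝ) ^ (1 / (2 * ((d : ℝ) - 1))) with hcdef
  have hc0 : 0 < c := Real.rpow_pos_of_pos hd0 _
  have hc : (c ^ (d - 1)) ^ 2 = d := by
    rw [← pow_mul, hcdef, ← Real.rpow_natCast, ← Real.rpow_mul hd0.le]
    push_cast [Nat.cast_sub (by omega : 1 ≤ d)]
    rw [show 1 / (2 * ((d:ℝ) - 1)) * (((d:ℝ) - 1) * 2) = 1 by field_simp, Real.rpow_one]
  obtain ⟨y, hy0, hy⟩ := final d hd lam hlam M hM c fun c' hc' =>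
    approx d hd lam hlam M hM z x hz hz0 hzP c' (hc0.trans hc') (by
      have h1 : c ^ (d - 1) < c' ^ (d - 1) := pow_lt_pow_left₀ hc' hc0.le (by omega)
      rw [← hc]
      exact pow_lt_pow_left₀ h1 (by positivity) (by norm_num))
  refine ⟨_, y, rfl, fun h0 => hy0 ?_, hy⟩
  have : M⁻¹.mulVec (M.mulVec (fun j => (y j : ℝ))) = 0 := by rw [h0, Matrix.mulVec_zero]
  rw [Matrix.mulVec_mulVec, Matrix.nonsing_inv_mul _ (by simp [hM]), Matrix.one_mulVec] at this
  ext j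
  have hj : (y j : ℝ) = 0 := congrFun this j
  exact_mod_cast hj
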